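/- arXiv:1204.6692 — 2 statements merged into one kernel-verified Lean document; each statement's English description precedes it below -/
import Mathlib

section
/- Let f_0 ∈ F_2[x] be any monic irreducible polynomial of degree n ≥ 1, and write n = 2^l · m with m odd and l ≥ 0. Then there exist an integer s with 0 ≤ s ≤ l+3 and monic irreducible polynomials f_0, f_1, …, f_s ∈ F_2[x] such that f_{i+1} divides f_i^Q for every 0 ≤ i < s, the degree of f_s is n or 2n, and f_s is of type (A, deg f_s). -/
open Polynomial

noncomputable def Qtrans (f : Polynomial (ZMod 2)) : Polynomial (ZMod 2) :=
  ∑ i ∈ Finset.range (f.natDegree + 1),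
    C (f.coeff i) * X ^ (f.natDegree - i) * (X ^ 2 + 1) ^ i

/-!
A step from `f` to a factor of `f^Q` passes from a root `a = b + b⁻¹` to `b`. On the curve
`y² + xy = x³ + 1` the dual `V` of the Frobenius endomorphism `π` acts on `x`-coordinates by exactly
`x ↦ x + x⁻¹`, so a chain of such steps is a chain of preimages under `V`. A point over `a ≠ 0` is
fixed by `π ^ n`, where `n` is the degree of `a`, iff `a` and `a⁻¹` have equal traces, and it has a
preimage fixed by `π ^ n` unless both traces are `1`, that is, unless `a` is of type `(A, n)`.

Since `π + V = -1` and `π V = 2`, one has `π = 1 + V²` and, for `n = 2 ^ l * m` with `m` odd,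
`π ^ n = 1 + V ^ (l + 2) (1 + V w)`. Hence `1 + V w` kills every `V ^ (l + 2)`-th image of a point
fixed by `π ^ n`. Starting from a point that it does not kill, the descent inside the fixed points
must therefore stop in time, and it can only stop at type `(A, n)`. If the traces of `a` and `a⁻¹`
differ, the descent takes place over degree `2 n`, possibly after one further step.
-/

section FrobTrace

/-- The sum `c + c ^ q + ⋯ + c ^ q ^ (N - 1)`: for `c` in the field with `q ^ N` elements, its trace
to the field with `q` elements. -/
def frobTrace {R : Type*} [Semiring R] (q N : ℕ) (c : R) : R :=
  ∑ i ∈ Finset.range N, c ^ q ^ i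

theorem frobTrace_add_left {R : Type*} [Semiring R] (q M N : ℕ) (c : R) :
    frobTrace q (M + N) c = frobTrace q M c + frobTrace q N (c ^ q ^ M) := by
  simp only [frobTrace, Finset.sum_range_add, pow_add, pow_mul]

theorem frobTrace_pow_of_pow_eq_self {R : Type*} [Ring R] {q N : ℕ} {c : R}
    (hc : c ^ q ^ N = c) : frobTrace q N (c ^ q) = frobTrace q N c := by
  have h : frobTrace q (1 + N) c = frobTrace q (N + 1) c := by rw [add_comm]
  have h_one (d : R) : frobTrace q 1 d = d := by simp [frobTrace]
  rwa [frobTrace_add_left, frobTrace_add_left, h_one, h_one, pow_one, hc, add_comm,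
    add_right_cancel_iff] at h

variable {R : Type*} [CommRing R] (p : ℕ) [Fact p.Prime] [CharP R p]

theorem frobTrace_add (N : ℕ) (c d : R) :
    frobTrace p N (c + d) = frobTrace p N c + frobTrace p N d := by
  simp only [frobTrace, ← Finset.sum_add_distrib, add_pow_char_pow]

theorem frobTrace_pow (N : ℕ) (c : R) : frobTrace p N (c ^ p) = frobTrace p N c ^ p := by
  simp only [frobTrace, sum_pow_char, ← pow_mul, mul_comm]

theorem pow_pow_eq_add_frobTrace {z c : R} (h : z ^ p = z + c) (N : ℕ) :
    z ^ p ^ N = z + frobTrace p N c := by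
  induction N with
  | zero => simp [frobTrace]
  | succ N ih =>
    rw [pow_succ', pow_mul, h, add_pow_char_pow, ih, add_assoc, frobTrace, frobTrace,
      Finset.sum_range_succ]

end FrobTrace

section CharTwo

variable {K : Type*} [Field K] {N : ℕ}

theorem exists_sq_eq_mul_add [IsAlgClosed K] (a d : K) : ∃ z, z ^ 2 = a * z + d := by
  obtain ⟨z, hz⟩ := IsAlgClosed.exists_root (C 1 * X ^ 2 + C (-a) * X + C (-d) : K[X])
    (by rw [degree_quadratic one_ne_zero]; decide)
  simp only [IsRoot, eval_add, eval_mul, eval_pow, eval_C, eval_X] at hz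
  exact ⟨z, by linear_combination hz⟩

variable [CharP K 2]

theorem frobTrace_two_eq_zero_or_one {c : K} (hc : c ^ 2 ^ N = c) :
    frobTrace 2 N c = 0 ∨ frobTrace 2 N c = 1 := by
  have h : frobTrace 2 N c ^ 2 = frobTrace 2 N c := by
    rw [← frobTrace_pow, frobTrace_pow_of_pow_eq_self hc]
  exact IsIdempotentElem.iff_eq_zero_or_one.1 ((sq _).symm.trans h)

theorem pow_two_pow_of_sq_eq {a z d : K} (ha : a ≠ 0) (haN : a ^ 2 ^ N = a)
    (hz : z ^ 2 = a * z + d) : z ^ 2 ^ N = z + frobTrace 2 N (d / a ^ 2) * a := by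
  have h : (z / a) ^ 2 = z / a + d / a ^ 2 := by
    rw [div_pow, hz]
    field_simp
  have := pow_pow_eq_add_frobTrace 2 h N
  rw [div_pow, haN] at this
  field_simp at this
  rw [this, mul_comm a]

theorem exists_add_inv_eq [IsAlgClosed K] (a : K) : ∃ b : K, b ≠ 0 ∧ b + b⁻¹ = a := by
  obtain ⟨b, hb⟩ := exists_sq_eq_mul_add a 1
  have hb0 : b ≠ 0 := by
    rintro rfl
    simp at hb
  exact ⟨b, hb0, by field_simp; grind⟩

theorem pow_two_pow_eq_add {b : K} (hb : b ≠ 0) (ha : b + b⁻¹ ≠ 0)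
    (haN : (b + b⁻¹) ^ 2 ^ N = b + b⁻¹) :
    b ^ 2 ^ N = b + frobTrace 2 N (b + b⁻¹)⁻¹ * (b + b⁻¹) := by
  have hinv : (b + b⁻¹)⁻¹ ^ 2 ^ N = (b + b⁻¹)⁻¹ := by rw [inv_pow, haN]
  have hsq : b ^ 2 = (b + b⁻¹) * b + 1 := by
    rw [add_mul, inv_mul_cancel₀ hb]
    grind
  rw [pow_two_pow_of_sq_eq ha haN hsq, one_div, ← inv_pow, frobTrace_pow_of_pow_eq_self hinv]

end CharTwo

section Minpoly

variable {F K : Type*} [Field F] [Field K] [Algebra F K] {a : K}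

theorem natDegree_minpoly_dvd_iff [Finite F] (ha : IsIntegral F a) {k : ℕ} :
    (minpoly F a).natDegree ∣ k ↔ a ^ Nat.card F ^ k = a := by
  rw [(minpoly.irreducible ha).natDegree_dvd_iff_dvd_X_pow_card_pow_sub_X, minpoly.dvd_iff]
  simp [sub_eq_zero]

open IntermediateField in
theorem algebraMap_nextCoeff_minpoly [Finite F] (ha : IsIntegral F a) :
    algebraMap F K (minpoly F a).nextCoeff =
      -frobTrace (Nat.card F) (minpoly F a).natDegree a := by
  have := adjoin.finiteDimensional ha
  have : Finite F⟮a⟯ := Module.finite_of_finite F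
  have h := congrArg (algebraMap F⟮a⟯ K)
    (FiniteField.algebraMap_trace_eq_sum_pow F F⟮a⟯ (AdjoinSimple.gen F a))
  rw [trace_adjoinSimpleGen ha, adjoin.finrank ha] at h
  rw [← neg_eq_iff_eq_neg, ← map_neg, frobTrace]
  simpa [← IsScalarTower.algebraMap_apply] using h

theorem minpoly_inv_dvd_reverse (a : K) (h0 : a ≠ 0) :
    minpoly F a⁻¹ ∣ (minpoly F a).reverse := by
  refine minpoly.dvd F _ ?_
  let := invertibleOfNonzero h0
  rw [← invOf_eq_inv]
  exact (eval₂_reverse_eq_zero_iff (algebraMap F K) a _).2 (minpoly.aeval F a)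

theorem minpoly_inv (ha : IsIntegral F a) (h0 : a ≠ 0) :
    minpoly F a⁻¹ = C ((minpoly F a).coeff 0)⁻¹ * (minpoly F a).reverse := by
  have hdeg {b : K} (hb : IsIntegral F b) (hb0 : b ≠ 0) :
      (minpoly F b⁻¹).natDegree ≤ (minpoly F b).natDegree :=
    (natDegree_le_of_dvd (minpoly_inv_dvd_reverse b hb0)
      (by simpa using minpoly.ne_zero hb)).trans (reverse_natDegree_le _)
  have hlead : (minpoly F a).reverse.leadingCoeff = (minpoly F a).coeff 0 := by
    rw [reverse_leadingCoeff, trailingCoeff,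
      natTrailingDegree_eq_zero_of_constantCoeff_ne_zero
        (p := minpoly F a) (minpoly.coeff_zero_ne_zero ha h0)]
  have hmonic : ((minpoly F a).reverse * C ((minpoly F a).coeff 0)⁻¹).Monic := by
    rw [← hlead]
    exact monic_mul_leadingCoeff_inv (by simpa using minpoly.ne_zero ha)
  rw [mul_comm]
  refine (eq_of_monic_of_dvd_of_natDegree_le (minpoly.monic ha.inv) hmonic
    (dvd_mul_of_dvd_left (minpoly_inv_dvd_reverse a h0) _) ?_).symm
  calc _ ≤ (minpoly F a).reverse.natDegree := natDegree_mul_C_le _ _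
    _ ≤ (minpoly F a).natDegree := reverse_natDegree_le _
    _ ≤ (minpoly F a⁻¹).natDegree := by simpa using hdeg ha.inv (inv_ne_zero h0)

theorem coeff_one_minpoly (ha : IsIntegral F a) (h0 : a ≠ 0) :
    (minpoly F a).coeff 1 = (minpoly F a).coeff 0 * (minpoly F a⁻¹).nextCoeff := by
  have h := minpoly_inv ha.inv (inv_ne_zero h0)
  rw [inv_inv] at h
  have h_zero : (minpoly F a).coeff 0 = ((minpoly F a⁻¹).coeff 0)⁻¹ := by
    rw [h, coeff_C_mul, coeff_zero_reverse, minpoly.monic ha.inv, mul_one]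
  rw [h_zero, h, coeff_C_mul, coeff_one_reverse]

end Minpoly

section Qtrans

variable {K : Type*} [Field K] [Algebra (ZMod 2) K]

theorem aeval_Qtrans (f : (ZMod 2)[X]) {b : K} (hb : b ≠ 0) :
    aeval b (Qtrans f) = b ^ f.natDegree * aeval (b + b⁻¹) f := by
  have hsq : b ^ 2 + 1 = b * (b + b⁻¹) := by field_simp
  rw [Qtrans, map_sum, aeval_eq_sum_range, Finset.mul_sum]
  refine Finset.sum_congr rfl fun i hi ↦ ?_
  have hi : i ≤ f.natDegree := Finset.mem_range_succ_iff.1 hi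
  simp only [map_mul, map_pow, map_add, map_one, aeval_X, aeval_C, hsq, Algebra.smul_def, mul_pow]
  rw [← pow_sub_mul_pow b hi]
  ring

theorem minpoly_dvd_Qtrans {b : K} (hb : b ≠ 0) :
    minpoly (ZMod 2) b ∣ Qtrans (minpoly (ZMod 2) (b + b⁻¹)) :=
  minpoly.dvd _ _ (by rw [aeval_Qtrans _ hb, minpoly.aeval, mul_zero])

end Qtrans

section LiftingExponent

theorem exists_one_add_sq_pow_eq {R : Type*} [CommRing R] {v : R} (hv : v ^ 2 + v + 2 = 0)
    (l : ℕ) {m : ℕ} (hm : Odd m) :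
    ∃ w, (1 + v ^ 2) ^ (2 ^ l * m) = 1 + v ^ (l + 2) * (1 + v * w) := by
  induction l with
  | zero =>
    obtain ⟨k, rfl⟩ := hm
    have h_sq : (1 + v ^ 2) ^ 2 = 1 - v ^ 3 := by linear_combination v ^ 2 * hv
    obtain ⟨c, hc⟩ : v ^ 3 ∣ (1 - v ^ 3) ^ k - 1 :=
      (by simp : v ^ 3 ∣ 1 - v ^ 3 - 1).trans (sub_one_dvd_pow_sub_one _ k)
    refine ⟨c * (1 + v ^ 2), ?_⟩
    rw [pow_zero, one_mul, pow_succ, pow_mul, h_sq]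
    linear_combination (1 + v ^ 2) * hc
  | succ l ih =>
    obtain ⟨w, hw⟩ := ih
    -- The cross term of the square is `2 * v ^ (l + 2) * (1 + v * w)`, and `2 = -v * (1 + v)`.
    refine ⟨v - w - v * w + v ^ l * (1 + v * w) ^ 2, ?_⟩
    rw [show 2 ^ (l + 1) * m = 2 ^ l * m * 2 by ring, pow_mul, hw]
    linear_combination v ^ (l + 2) * (1 + v * w - v) * hv

open scoped IsMulCommutative in
theorem exists_commute_pow_eq {A : Type*} [Ring A] {f v : A} (h_trace : 1 + f + v = 0)
    (h_norm : f * v = 2) (l : ℕ) {m : ℕ} (hm : Odd m) :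
    ∃ w, Commute v w ∧ f ^ (2 ^ l * m) = 1 + v ^ (l + 2) * (1 + v * w) := by
  have hv : v ^ 2 + v + 2 = 0 := by
    calc v ^ 2 + v + 2 = (1 + f + v) * v := by rw [← h_norm]; noncomm_ring
      _ = 0 := by rw [h_trace, zero_mul]
  have hf : f = 1 + v ^ 2 := by
    refine sub_eq_zero.1 ?_
    calc f - (1 + v ^ 2) = 1 + f + v - (v ^ 2 + v + 2) := by
          rw [← one_add_one_eq_two (R := A)]
          noncomm_ring
      _ = 0 := by rw [h_trace, hv, sub_zero]
  let v' : Algebra.adjoin ℤ {v} := ⟨v, Algebra.self_mem_adjoin_singleton ℤ v⟩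
  obtain ⟨w, hw⟩ := exists_one_add_sq_pow_eq (v := v') (Subtype.ext hv) l hm
  exact ⟨w, congrArg Subtype.val (mul_comm v' w), hf ▸ congrArg Subtype.val hw⟩

end LiftingExponent

/-- The Koblitz curve `y² + xy = x³ + 1`. -/
def koblitz : WeierstrassCurve (ZMod 2) := ⟨1, 0, 0, 0, 1⟩

instance : koblitz.IsElliptic :=
  ⟨by rw [show koblitz.Δ = 1 by decide]; exact isUnit_one⟩

/-- The group of points of `koblitz` over an extension `K` of `𝔽₂`. -/
abbrev KoblitzPoint (K : Type*) [Field K] [Algebra (ZMod 2) K] :=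
  (koblitz.baseChange K).toAffine.Point

section Koblitz

variable {K : Type*} [Field K] [Algebra (ZMod 2) K]

local instance : CharP K 2 :=
  charP_of_injective_algebraMap (algebraMap (ZMod 2) K).injective 2

namespace KoblitzPoint

open WeierstrassCurve WeierstrassCurve.Affine

instance : (koblitz.baseChange K).toAffine.IsElliptic :=
  inferInstanceAs ((koblitz.map (algebraMap (ZMod 2) K)).IsElliptic)

theorem equation_iff (x y : K) :
    (koblitz.baseChange K).toAffine.Equation x y ↔ y ^ 2 + x * y = x ^ 3 + 1 := by
  simp [Affine.equation_iff, koblitz]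

theorem negY_eq (x y : K) : (koblitz.baseChange K).toAffine.negY x y = y + x := by
  simp [negY, koblitz]
  grind

theorem addX_eq (x₁ x₂ ℓ : K) :
    (koblitz.baseChange K).toAffine.addX x₁ x₂ ℓ = ℓ ^ 2 + ℓ + x₁ + x₂ := by
  simp [addX, koblitz]
  grind

theorem addY_eq (x₁ x₂ y ℓ : K) :
    (koblitz.baseChange K).toAffine.addY x₁ x₂ y ℓ =
      ℓ * (x₁ + (ℓ ^ 2 + ℓ + x₁ + x₂)) + (ℓ ^ 2 + ℓ + x₁ + x₂) + y := by
  rw [addY, negAddY, negY_eq, addX_eq]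
  grind

/-- The affine point `(x, y)`. -/
def mk (x y : K) (h : y ^ 2 + x * y = x ^ 3 + 1) : KoblitzPoint K :=
  Point.mk ((equation_iff x y).2 h)

theorem eq_zero_or_eq_mk (P : KoblitzPoint K) : P = 0 ∨ ∃ x y h, P = mk x y h := by
  rcases P with _ | ⟨x, y, h⟩
  · exact .inl rfl
  · exact .inr ⟨x, y, (equation_iff x y).1 h.1, rfl⟩

theorem mk_inj {x y x' y' : K} {h h'} : mk x y h = mk x' y' h' ↔ x = x' ∧ y = y' := by
  simp [mk, Point.mk]

theorem neg_mk {x y : K} (h) : -mk x y h = mk x (y + x) (by grind) := by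
  simp only [mk, Point.mk, Point.neg_some, negY_eq]

theorem equation_ver {x y : K} (h : y ^ 2 + x * y = x ^ 3 + 1) (hx : x ≠ 0) :
    (y + (y + x ^ 2 + x + 1) / x ^ 2) ^ 2 + (x + x⁻¹) * (y + (y + x ^ 2 + x + 1) / x ^ 2)
      = (x + x⁻¹) ^ 3 + 1 := by
  field_simp
  grind

theorem exists_eq_mk {P : KoblitzPoint K} {x : K} (hP : P.xRep = ![x, 1]) :
    ∃ y h, P = mk x y h := by
  obtain rfl | ⟨x', y, h, rfl⟩ := eq_zero_or_eq_mk P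
  · simp at hP
  · obtain rfl : x' = x := by simpa [mk, Point.mk] using hP
    exact ⟨y, h, rfl⟩

theorem exists_xRep_eq [IsAlgClosed K] (x : K) : ∃ P : KoblitzPoint K, P.xRep = ![x, 1] := by
  obtain ⟨y, hy⟩ := exists_sq_eq_mul_add x (x ^ 3 + 1)
  exact ⟨mk x y (by grind), rfl⟩

variable [DecidableEq K]

/-- The Frobenius endomorphism `(x, y) ↦ (x², y²)`. -/
noncomputable def frob : AddMonoid.End (KoblitzPoint K) :=
  Point.map (W' := koblitz) (FiniteField.frobeniusAlgHom (ZMod 2) K)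

theorem frob_mk {x y : K} (h) : frob (mk x y h) = mk (x ^ 2) (y ^ 2) (by grind) := by
  refine (Point.map_some _ _).trans ?_
  simp [mk, Point.mk]

/-- The Verschiebung, the dual of `frob`: the curve has four points over `𝔽₂`, so `frob` has trace
`-1` and its dual is `-1 - frob`. On `x`-coordinates it is `x ↦ x + x⁻¹`. -/
noncomputable def ver : AddMonoid.End (KoblitzPoint K) := -(1 + frob)

theorem mk_add_self {x y : K} (h) (hx : x ≠ 0) :
    mk x y h + mk x y h = frob (mk _ _ (equation_ver h hx)) := by
  have hy : y ≠ (koblitz.baseChange K).toAffine.negY x y := by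
    rw [negY_eq]
    simpa using hx
  have h_slope : (koblitz.baseChange K).toAffine.slope x x y y = (x ^ 2 + y) / x := by
    rw [slope_of_Y_ne rfl hy, negY_eq]
    congr 1
    · simp [koblitz]; grind
    · grind
  rw [frob_mk]
  simp only [mk, Point.mk, Point.add_self_of_Y_ne hy, Point.some.injEq, addX_eq, addY_eq, h_slope]
  constructor <;> field_simp <;> grind

theorem mk_zero_add_self {y : K} (h) : mk 0 y h + mk 0 y h = 0 := by
  have h_neg : -mk 0 y h = mk 0 y h := by rw [neg_mk, mk_inj]; simp
  nth_rw 1 [← h_neg, neg_add_cancel]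

theorem ver_mk {x y : K} (h) (hx : x ≠ 0) :
    ver (mk x y h) = mk _ _ (equation_ver h hx) := by
  suffices mk x y h + frob (mk x y h) = -mk _ _ (equation_ver h hx) by
    rw [← neg_neg (mk _ _ (equation_ver h hx)), ← this]; rfl
  rcases eq_or_ne x 1 with rfl | hx1
  · have hy : y ^ 2 = y := by grind
    have : frob (mk 1 y h) = mk 1 y h := by simp [frob_mk, hy]
    rw [this, mk_add_self h hx, frob_mk, neg_mk, mk_inj]
    grind
  · have hxx : x ≠ x ^ 2 := by grind
    have h_slope : (koblitz.baseChange K).toAffine.slope x (x ^ 2) y (y ^ 2)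
      = (y + x ^ 2 + x + 1) / x := by
      have := sub_ne_zero.2 hxx
      rw [slope_of_X_ne hxx]
      field_simp
      grind
    rw [frob_mk, neg_mk]
    simp only [mk, Point.mk, Point.add_of_X_ne hxx, Point.some.injEq, addX_eq, addY_eq, h_slope]
    constructor <;> field_simp <;> grind

theorem ver_mk_zero {y : K} (h) : ver (mk 0 y h) = 0 := by
  have hy : y = 1 := by grind
  have h_frob : frob (mk 0 y h) = mk 0 y h := by simp [frob_mk, hy]
  change -(mk 0 y h + frob (mk 0 y h)) = 0
  rw [h_frob, mk_zero_add_self, neg_zero]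

theorem frob_mul_ver : (frob * ver : AddMonoid.End (KoblitzPoint K)) = 2 := by
  ext1 P
  change frob (ver P) = (2 : ℕ) • P
  rw [two_nsmul]
  obtain rfl | ⟨x, y, h, rfl⟩ := eq_zero_or_eq_mk P
  · simp
  · rcases eq_or_ne x 0 with rfl | hx
    · rw [ver_mk_zero, map_zero, mk_zero_add_self]
    · rw [ver_mk h hx, mk_add_self h hx]

theorem one_add_frob_add_ver : (1 + frob + ver : AddMonoid.End (KoblitzPoint K)) = 0 :=
  add_neg_cancel _

theorem commute_frob_pow {w : AddMonoid.End (KoblitzPoint K)} (hw : Commute ver w) (N : ℕ) :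
    Commute (frob ^ N) w := by
  have h : (frob : AddMonoid.End (KoblitzPoint K)) = -(1 + ver) :=
    eq_neg_of_add_eq_zero_left (by rw [← one_add_frob_add_ver]; abel)
  rw [h]
  exact (((Commute.one_left w).add_left hw).neg_left).pow_left N

theorem exists_frob_pow_eq (l : ℕ) {m : ℕ} (hm : Odd m) :
    ∃ w : AddMonoid.End (KoblitzPoint K),
      Commute ver w ∧ frob ^ (2 ^ l * m) = 1 + ver ^ (l + 2) * (1 + ver * w) :=
  exists_commute_pow_eq one_add_frob_add_ver frob_mul_ver l hm

variable {P Q : KoblitzPoint K} {a b x : K} {N : ℕ}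

theorem frob_pow_mk {x y : K} (h) (N : ℕ) :
    ∃ h', (frob ^ N) (mk x y h) = mk (x ^ 2 ^ N) (y ^ 2 ^ N) h' := by
  induction N with
  | zero => simpa using h
  | succ N ih =>
    obtain ⟨h', ih⟩ := ih
    simp_rw [pow_succ 2 N, pow_mul]
    rw [pow_succ' (frob (K := K)), AddMonoid.End.coe_mul, Function.comp_apply, ih, frob_mk]
    exact ⟨by grind, rfl⟩

theorem xRep_frob_pow (hP : P.xRep = ![x, 1]) (N : ℕ) :
    ((frob ^ N) P).xRep = ![x ^ 2 ^ N, 1] := by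
  obtain ⟨y, h, rfl⟩ := exists_eq_mk hP
  obtain ⟨_, h_frob⟩ := frob_pow_mk h N
  rw [h_frob]
  rfl

theorem xRep_ver (hP : P.xRep = ![x, 1]) (hx : x ≠ 0) : (ver P).xRep = ![x + x⁻¹, 1] := by
  obtain ⟨y, h, rfl⟩ := exists_eq_mk hP
  rw [ver_mk h hx]
  rfl

theorem exists_xRep_eq_of_xRep_ver (hQ : (ver Q).xRep = ![a, 1]) :
    ∃ b, b ≠ 0 ∧ Q.xRep = ![b, 1] ∧ b + b⁻¹ = a := by
  obtain rfl | ⟨b, y, h, rfl⟩ := eq_zero_or_eq_mk Q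
  · simp at hQ
  · have hb : b ≠ 0 := by
      rintro rfl
      simp [ver_mk_zero] at hQ
    rw [xRep_ver rfl hb] at hQ
    exact ⟨b, hb, rfl, by simpa using hQ⟩

theorem exists_ver_eq [IsAlgClosed K] (hb : b ≠ 0) (hP : P.xRep = ![b + b⁻¹, 1]) :
    ∃ Q, Q.xRep = ![b, 1] ∧ ver Q = P := by
  obtain ⟨Q, hQ⟩ := exists_xRep_eq b
  obtain h | h := Point.eq_or_eq_neg_of_xRep_eq_xRep ((xRep_ver hQ hb).trans hP.symm)
  · exact ⟨Q, hQ, h⟩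
  · exact ⟨-Q, by rw [Point.xRep_neg, hQ], by rw [map_neg, h, neg_neg]⟩

theorem frob_pow_eq_self_iff (hP : P.xRep = ![x, 1]) (hx : x ≠ 0) (hxN : x ^ 2 ^ N = x) :
    (frob ^ N) P = P ↔ frobTrace 2 N x = frobTrace 2 N x⁻¹ := by
  obtain ⟨y, h, rfl⟩ := exists_eq_mk hP
  have hy : y ^ 2 ^ N = y + frobTrace 2 N ((x ^ 3 + 1) / x ^ 2) * x :=
    pow_two_pow_of_sq_eq hx hxN (by grind)
  have hd : (x ^ 3 + 1) / x ^ 2 = x + x⁻¹ ^ 2 := by field_simp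
  have hinv : x⁻¹ ^ 2 ^ N = x⁻¹ := by rw [inv_pow, hxN]
  obtain ⟨_, h_frob⟩ := frob_pow_mk h N
  rw [h_frob, mk_inj, hy, hd, frobTrace_add, frobTrace_pow_of_pow_eq_self hinv]
  simp [hxN, hx, CharTwo.add_eq_zero]

theorem frob_pow_eq_neg (hP : P.xRep = ![x, 1]) (hx : x ≠ 0) (hxN : x ^ 2 ^ N = x)
    (hne : frobTrace 2 N x ≠ frobTrace 2 N x⁻¹) : (frob ^ N) P = -P :=
  (Point.eq_or_eq_neg_of_xRep_eq_xRep ((xRep_frob_pow hP N).trans (by rw [hxN, hP]))).resolve_left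
    (mt (frob_pow_eq_self_iff hP hx hxN).1 hne)

theorem pow_two_pow_eq_self (hP : P.xRep = ![x, 1])
    (hPN : (frob ^ N) P = P ∨ (frob ^ N) P = -P) : x ^ 2 ^ N = x := by
  have h := (xRep_frob_pow hP N).symm.trans (Point.xRep_eq_xRep_iff.2 hPN)
  simpa [hP] using h

theorem apply_ver_pow_eq_zero {u : AddMonoid.End (KoblitzPoint K)} {j : ℕ} (hu : Commute ver u)
    (hfrob : frob ^ N = 1 + ver ^ j * u) (hPN : (frob ^ N) P = P) : u ((ver ^ j) P) = 0 := by
  have h_comm : u ((ver ^ j) P) = (ver ^ j) (u P) := congr($((hu.pow_left j).eq.symm) P)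
  have h_frob : (frob ^ N) P = P + (ver ^ j) (u P) := congr($hfrob P)
  rwa [hPN, ← h_comm, left_eq_add] at h_frob

theorem apply_ne_zero_of_frob_pow_eq_neg {w : AddMonoid.End (KoblitzPoint K)}
    (hw : Commute ver w) (ha0 : a ≠ 0) (haN : a ^ 2 ^ N = a) (hP : P.xRep = ![a, 1])
    (hPN : (frob ^ N) P = -P) (ht : frobTrace 2 N a⁻¹ ≠ 0) : P + ver (w P) ≠ 0 := by
  intro h
  have h_ver : ver (-w P) = P := by
    rw [map_neg]
    exact (eq_neg_of_add_eq_zero_left h).symm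
  obtain ⟨b, hb, hQ, rfl⟩ := exists_xRep_eq_of_xRep_ver (h_ver ▸ hP)
  have h_frob : (frob ^ N) (-w P) = - -w P := by
    have h_comm : (frob ^ N) (w P) = w ((frob ^ N) P) := congr($(commute_frob_pow hw N) P)
    rw [map_neg, h_comm, hPN, map_neg]
  have hbN := pow_two_pow_eq_add hb ha0 haN
  rw [pow_two_pow_eq_self hQ (.inr h_frob), left_eq_add] at hbN
  exact mul_ne_zero ht ha0 hbN

theorem exists_ne_zero_ver_eq_zero_frob_pow_eq_self (N : ℕ) :
    ∃ T : KoblitzPoint K, T ≠ 0 ∧ ver T = 0 ∧ (frob ^ N) T = T := by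
  refine ⟨mk 0 1 (by simp), Point.some_ne_zero _, ver_mk_zero _, ?_⟩
  obtain ⟨_, h⟩ := frob_pow_mk (x := (0 : K)) (y := 1) (by simp) N
  rw [h, mk_inj]
  simp

end KoblitzPoint

section Descent

variable {a b : K} {N k : ℕ}

/-- The minimal polynomial of `c` over `𝔽₂` is of type `(A, N)`: the traces of `c` and `c⁻¹`
are its coefficients of `X ^ (N - 1)` and `X`, since its constant coefficient is `1`. -/
structure IsTypeA (N : ℕ) (c : K) : Prop where
  natDegree_minpoly : (minpoly (ZMod 2) c).natDegree = N
  frobTrace_eq_one : frobTrace 2 N c = 1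
  frobTrace_inv_eq_one : frobTrace 2 N c⁻¹ = 1

/-- At most `k` steps, each from some `b + b⁻¹` back to `b`, lead from `a` to an element of type
`(A, N)`. On minimal polynomials, every step passes to a factor of the `Q`-transform. -/
inductive ReachesTypeA (N : ℕ) : ℕ → K → Prop
  | of_isTypeA {k : ℕ} {a : K} : IsTypeA N a → ReachesTypeA N k a
  | step {k : ℕ} {b : K} : b ≠ 0 → ReachesTypeA N k b → ReachesTypeA N (k + 1) (b + b⁻¹)

theorem ReachesTypeA.mono (h : ReachesTypeA N k a) {k' : ℕ} (hk : k ≤ k') :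
    ReachesTypeA N k' a := by
  induction h generalizing k' with
  | of_isTypeA ha => exact .of_isTypeA ha
  | step hb _ ih =>
    obtain ⟨j, rfl⟩ := Nat.exists_eq_add_of_le' hk
    exact .step hb (ih (k' := j + _) (by lia))

theorem reachesTypeA_zero : ReachesTypeA 1 1 (0 : K) := by
  have h : IsTypeA 1 (1 : K) := by
    constructor
    · simpa [minpoly.one] using natDegree_X_sub_C (1 : ZMod 2)
    · simp [frobTrace]
    · simp [frobTrace]
  simpa [CharTwo.add_self_eq_zero] using ReachesTypeA.step one_ne_zero (.of_isTypeA (k := 0) h)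

variable [Algebra.IsAlgebraic (ZMod 2) K]

theorem natDegree_minpoly_zmod_two_dvd_iff :
    (minpoly (ZMod 2) a).natDegree ∣ k ↔ a ^ 2 ^ k = a := by
  rw [natDegree_minpoly_dvd_iff (Algebra.IsIntegral.isIntegral a), Nat.card_zmod]

theorem natDegree_minpoly_zmod_two_inv (a : K) :
    (minpoly (ZMod 2) a⁻¹).natDegree = (minpoly (ZMod 2) a).natDegree :=
  Nat.dvd_right_iff_eq.1 fun k ↦ by
    simp only [natDegree_minpoly_zmod_two_dvd_iff, inv_pow, inv_inj]

theorem natDegree_minpoly_add_inv_dvd (b : K) :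
    (minpoly (ZMod 2) (b + b⁻¹)).natDegree ∣ (minpoly (ZMod 2) b).natDegree := by
  rw [natDegree_minpoly_zmod_two_dvd_iff, add_pow_char_pow, inv_pow,
    natDegree_minpoly_zmod_two_dvd_iff.1 dvd_rfl]

theorem natDegree_minpoly_eq_of_pow_eq (ha : (minpoly (ZMod 2) (b + b⁻¹)).natDegree = N)
    (hb : b ^ 2 ^ N = b) : (minpoly (ZMod 2) b).natDegree = N :=
  Nat.dvd_antisymm (natDegree_minpoly_zmod_two_dvd_iff.2 hb)
    (ha ▸ natDegree_minpoly_add_inv_dvd b)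

theorem natDegree_minpoly_eq_two_mul (ha : (minpoly (ZMod 2) (b + b⁻¹)).natDegree = N)
    (hb : b ^ 2 ^ N ≠ b) (hb' : b ^ 2 ^ (2 * N) = b) :
    (minpoly (ZMod 2) b).natDegree = 2 * N := by
  obtain ⟨c, hc⟩ := ha ▸ natDegree_minpoly_add_inv_dvd b
  have hN : 0 < N := ha ▸ minpoly.natDegree_pos (Algebra.IsIntegral.isIntegral _)
  rw [Ne, ← natDegree_minpoly_zmod_two_dvd_iff, hc] at hb
  rw [← natDegree_minpoly_zmod_two_dvd_iff, hc, mul_comm 2, mul_dvd_mul_iff_left hN.ne'] at hb'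
  obtain rfl | rfl := (Nat.dvd_prime Nat.prime_two).1 hb'
  · simp at hb
  · rw [hc, mul_comm]

section Points

open KoblitzPoint

variable [DecidableEq K] {P Q : KoblitzPoint K}

theorem exists_of_xRep_ver (ha : (minpoly (ZMod 2) a).natDegree = N)
    (hQ : (ver Q).xRep = ![a, 1]) (hQN : (frob ^ N) Q = Q) :
    ∃ b, b ≠ 0 ∧ Q.xRep = ![b, 1] ∧ b + b⁻¹ = a ∧ (minpoly (ZMod 2) b).natDegree = N := by
  obtain ⟨b, hb, hQb, rfl⟩ := exists_xRep_eq_of_xRep_ver hQ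
  exact ⟨b, hb, hQb, rfl, natDegree_minpoly_eq_of_pow_eq ha (pow_two_pow_eq_self hQb (.inl hQN))⟩

variable [IsAlgClosed K]

theorem exists_ver_eq_of_frobTrace_eq_zero (ha0 : a ≠ 0)
    (ha : (minpoly (ZMod 2) a).natDegree = N) (hP : P.xRep = ![a, 1])
    (ht : frobTrace 2 N a = 0) (ht' : frobTrace 2 N a⁻¹ = 0) :
    ∃ Q, ver Q = P ∧ (frob ^ N) Q = Q := by
  obtain ⟨b, hb, rfl⟩ := exists_add_inv_eq a
  obtain ⟨Q, hQ, hQP⟩ := exists_ver_eq hb hP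
  have hbN : b ^ 2 ^ N = b := by
    rw [pow_two_pow_eq_add hb ha0 (natDegree_minpoly_zmod_two_dvd_iff.1 ha.dvd), ht', zero_mul,
      add_zero]
  rw [frobTrace_add, CharTwo.add_eq_zero] at ht
  exact ⟨Q, hQP, (frob_pow_eq_self_iff hQ hb hbN).2 ht⟩

theorem isTypeA_or_exists_ver_eq (ha0 : a ≠ 0) (ha : (minpoly (ZMod 2) a).natDegree = N)
    (hP : P.xRep = ![a, 1]) (hPN : (frob ^ N) P = P) :
    IsTypeA N a ∨ ∃ Q, ver Q = P ∧ (frob ^ N) Q = Q := by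
  have haN : a ^ 2 ^ N = a := natDegree_minpoly_zmod_two_dvd_iff.1 ha.dvd
  have ht := (frob_pow_eq_self_iff hP ha0 haN).1 hPN
  obtain h | h := frobTrace_two_eq_zero_or_one haN
  · exact .inr (exists_ver_eq_of_frobTrace_eq_zero ha0 ha hP h (ht ▸ h))
  · exact .inl ⟨ha, h, ht ▸ h⟩

theorem reachesTypeA_of_forall_ver_pow_ne (ha0 : a ≠ 0)
    (ha : (minpoly (ZMod 2) a).natDegree = N) (hP : P.xRep = ![a, 1]) (hPN : (frob ^ N) P = P)
    (h : ∀ R, (frob ^ N) R = R → (ver ^ (k + 1)) R ≠ P) : ReachesTypeA N k a := by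
  obtain hA | ⟨Q, rfl, hQN⟩ := isTypeA_or_exists_ver_eq ha0 ha hP hPN
  · exact .of_isTypeA hA
  induction k generalizing a Q with
  | zero => exact absurd (by simp) (h Q hQN)
  | succ k ih =>
    obtain ⟨b, hb, hQb, rfl, hbN⟩ := exists_of_xRep_ver ha hP hQN
    refine .step hb ?_
    obtain hA | ⟨Q', rfl, hQN'⟩ := isTypeA_or_exists_ver_eq hb hbN hQb hQN
    · exact .of_isTypeA hA
    · refine ih hb hbN Q' hQN' hQb hQN fun R hRN hR ↦ h R hRN ?_
      rw [pow_succ', AddMonoid.End.coe_mul, Function.comp_apply, hR]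

theorem reachesTypeA_of_apply_ne_zero (ha0 : a ≠ 0)
    (ha : (minpoly (ZMod 2) a).natDegree = N) (hP : P.xRep = ![a, 1]) (hPN : (frob ^ N) P = P)
    {u : AddMonoid.End (KoblitzPoint K)} (hu : Commute ver u)
    (hfrob : frob ^ N = 1 + ver ^ (k + 1) * u) (h : u P ≠ 0) :
    ReachesTypeA N k a :=
  reachesTypeA_of_forall_ver_pow_ne ha0 ha hP hPN fun _ hRN hR ↦
    h (hR ▸ apply_ver_pow_eq_zero hu hfrob hRN)

end Points

section Types

open KoblitzPoint

variable [IsAlgClosed K]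

theorem reachesTypeA_of_frobTrace_eq_zero_of_inv_eq_zero (ha0 : a ≠ 0) {l m : ℕ} (hm : Odd m)
    (ha : (minpoly (ZMod 2) a).natDegree = 2 ^ l * m)
    (ht : frobTrace 2 (2 ^ l * m) a = 0) (ht' : frobTrace 2 (2 ^ l * m) a⁻¹ = 0) :
    ReachesTypeA (2 ^ l * m) (l + 2) a := by
  classical
  obtain ⟨P, hP⟩ := exists_xRep_eq a
  obtain ⟨Q, rfl, hQN⟩ := exists_ver_eq_of_frobTrace_eq_zero ha0 ha hP ht ht'
  obtain ⟨w, hw, hfrob⟩ := exists_frob_pow_eq (K := K) l hm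
  have hu : Commute ver (1 + ver * w) := .add_right (.one_right _) (.mul_right rfl hw)
  have hu_apply (R : KoblitzPoint K) :
      (1 + ver * w : AddMonoid.End (KoblitzPoint K)) R = R + w (ver R) := congr(R + $hw.eq R)
  suffices ∃ R, ver R = ver Q ∧ (frob ^ (2 ^ l * m)) R = R ∧ R + w (ver R) ≠ 0 by
    obtain ⟨R, hRQ, hRN, hR⟩ := this
    obtain ⟨b, hb, hRb, rfl, hbN⟩ := exists_of_xRep_ver ha (hRQ ▸ hP) hRN
    exact .step hb (reachesTypeA_of_apply_ne_zero hb hbN hRb hRN hu hfrob (hu_apply R ▸ hR))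
  -- The nonzero fixed point `T` of `ker ver` satisfies `T + w (ver T) = T`, so translate by it.
  by_cases h : Q + w (ver Q) = 0
  · obtain ⟨T, hT, hT_ver, hTN⟩ := exists_ne_zero_ver_eq_zero_frob_pow_eq_self (K := K) (2 ^ l * m)
    have h_ver : ver (Q + T) = ver Q := by rw [map_add, hT_ver, add_zero]
    refine ⟨Q + T, h_ver, by rw [map_add, hQN, hTN], ?_⟩
    rwa [h_ver, add_right_comm, h, zero_add]
  · exact ⟨Q, rfl, hQN, h⟩

theorem reachesTypeA_of_frobTrace_eq_zero_of_inv_eq_one (ha0 : a ≠ 0) {l m : ℕ} (hm : Odd m)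
    (ha : (minpoly (ZMod 2) a).natDegree = 2 ^ l * m)
    (ht : frobTrace 2 (2 ^ l * m) a = 0) (ht' : frobTrace 2 (2 ^ l * m) a⁻¹ = 1) :
    ReachesTypeA (2 ^ (l + 1) * m) (l + 2) a := by
  classical
  have haN := natDegree_minpoly_zmod_two_dvd_iff.1 ha.dvd
  obtain ⟨b, hb, rfl⟩ := exists_add_inv_eq a
  obtain ⟨P, hP⟩ := exists_xRep_eq (b + b⁻¹)
  obtain ⟨Q, hQ, rfl⟩ := exists_ver_eq hb hP
  set N := 2 ^ l * m
  have hN : 2 ^ (l + 1) * m = 2 * N := by ring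
  have hbN : b ^ 2 ^ N = b⁻¹ := by
    rw [pow_two_pow_eq_add hb ha0 haN, ht', one_mul, CharTwo.add_cancel_left]
  have hbN' : b⁻¹ ^ 2 ^ N = b := by rw [inv_pow, hbN, inv_inv]
  have hb2N : b ^ 2 ^ (2 * N) = b := by rw [two_mul, pow_add, pow_mul, hbN, hbN']
  have hb_deg : (minpoly (ZMod 2) b).natDegree = 2 * N := by
    refine natDegree_minpoly_eq_two_mul ha (fun h ↦ ha0 ?_) hb2N
    rw [← hbN, h, CharTwo.add_self_eq_zero]
  have hQN : (frob ^ (2 * N)) Q = Q := by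
    rw [frob_pow_eq_self_iff hQ hb hb2N, two_mul, frobTrace_add_left, frobTrace_add_left, hbN,
      hbN', add_comm]
  have hPN : (frob ^ N) (ver Q) = -ver Q := frob_pow_eq_neg hP ha0 haN (by simp [ht, ht'])
  obtain ⟨w, hw, hfrob⟩ := exists_frob_pow_eq (K := K) (l + 1) hm
  rw [hN] at hfrob ⊢
  refine .step hb (reachesTypeA_of_forall_ver_pow_ne hb hb_deg hQ hQN fun R hRN hR ↦ ?_)
  refine apply_ne_zero_of_frob_pow_eq_neg hw ha0 haN hP hPN (by simp [ht']) ?_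
  have hu : Commute ver (1 + ver * w) := .add_right (.one_right _) (.mul_right rfl hw)
  have := apply_ver_pow_eq_zero hu hfrob hRN
  rwa [pow_succ', AddMonoid.End.coe_mul, Function.comp_apply, hR] at this

theorem reachesTypeA_of_frobTrace_eq_one_of_inv_eq_zero (ha0 : a ≠ 0) {l m : ℕ} (hm : Odd m)
    (ha : (minpoly (ZMod 2) a).natDegree = 2 ^ l * m)
    (ht : frobTrace 2 (2 ^ l * m) a = 1) (ht' : frobTrace 2 (2 ^ l * m) a⁻¹ = 0) :
    ReachesTypeA (2 ^ (l + 1) * m) (l + 3) a := by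
  have haN := natDegree_minpoly_zmod_two_dvd_iff.1 ha.dvd
  suffices ∃ b, b ≠ 0 ∧ b + b⁻¹ = a ∧ b ^ 2 ^ (2 ^ l * m) = b ∧ frobTrace 2 (2 ^ l * m) b = 0 by
    obtain ⟨b, hb, rfl, hbN, hbt⟩ := this
    rw [frobTrace_add, hbt, zero_add] at ht
    exact .step hb (reachesTypeA_of_frobTrace_eq_zero_of_inv_eq_one hb hm
      (natDegree_minpoly_eq_of_pow_eq ha hbN) hbt ht)
  obtain ⟨b, hb, rfl⟩ := exists_add_inv_eq a
  have hbN : b ^ 2 ^ (2 ^ l * m) = b := by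
    rw [pow_two_pow_eq_add hb ha0 haN, ht', zero_mul, add_zero]
  obtain h | h := frobTrace_two_eq_zero_or_one hbN
  · exact ⟨b, hb, rfl, hbN, h⟩
  · rw [frobTrace_add, h, add_eq_left] at ht
    exact ⟨b⁻¹, inv_ne_zero hb, by rw [inv_inv, add_comm], by rw [inv_pow, hbN], ht⟩

theorem reachesTypeA_or_reachesTypeA {l m : ℕ} (hm : Odd m)
    (ha : (minpoly (ZMod 2) a).natDegree = 2 ^ l * m) :
    ReachesTypeA (2 ^ l * m) (l + 3) a ∨ ReachesTypeA (2 ^ (l + 1) * m) (l + 3) a := by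
  rcases eq_or_ne a 0 with rfl | ha0
  · rw [minpoly.zero, natDegree_X] at ha
    exact .inl (ha ▸ reachesTypeA_zero.mono (by lia))
  have haN := natDegree_minpoly_zmod_two_dvd_iff.1 ha.dvd
  have haN' : a⁻¹ ^ 2 ^ (2 ^ l * m) = a⁻¹ := by rw [inv_pow, haN]
  obtain ht | ht := frobTrace_two_eq_zero_or_one haN <;>
    obtain ht' | ht' := frobTrace_two_eq_zero_or_one haN'
  · exact .inl ((reachesTypeA_of_frobTrace_eq_zero_of_inv_eq_zero ha0 hm ha ht ht').mono (by lia))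
  · exact .inr ((reachesTypeA_of_frobTrace_eq_zero_of_inv_eq_one ha0 hm ha ht ht').mono (by lia))
  · exact .inr (reachesTypeA_of_frobTrace_eq_one_of_inv_eq_zero ha0 hm ha ht ht')
  · exact .inl (.of_isTypeA ⟨ha, ht, ht'⟩)

end Types

section Chain

theorem IsTypeA.coeff_minpoly (h : IsTypeA N a) :
    (minpoly (ZMod 2) a).coeff (N - 1) = 1 ∧ (minpoly (ZMod 2) a).coeff 1 = 1 := by
  have h_int (c : K) : IsIntegral (ZMod 2) c := Algebra.IsIntegral.isIntegral c
  have h_next {c : K} (hc : (minpoly (ZMod 2) c).natDegree = N) (ht : frobTrace 2 N c = 1) :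
      (minpoly (ZMod 2) c).nextCoeff = 1 := by
    refine (algebraMap (ZMod 2) K).injective ?_
    rw [algebraMap_nextCoeff_minpoly (h_int c), Nat.card_zmod, hc, ht, map_one, CharTwo.neg_eq]
  have ha0 : a ≠ 0 := by
    rintro rfl
    simpa [frobTrace] using h.frobTrace_eq_one
  constructor
  · rw [← h_next h.natDegree_minpoly h.frobTrace_eq_one,
      nextCoeff_of_natDegree_pos (minpoly.natDegree_pos (h_int a)), h.natDegree_minpoly]
  · rw [coeff_one_minpoly (h_int a) ha0, h_next
      ((natDegree_minpoly_zmod_two_inv a).trans h.natDegree_minpoly) h.frobTrace_inv_eq_one,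
      mul_one]
    have h_one : ∀ c : ZMod 2, c ≠ 0 → c = 1 := by decide
    exact h_one _ (minpoly.coeff_zero_ne_zero (h_int a) ha0)

theorem ReachesTypeA.exists_chain (h : ReachesTypeA N k a) :
    ∃ (s : ℕ) (F : ℕ → (ZMod 2)[X]), s ≤ k ∧ F 0 = minpoly (ZMod 2) a ∧
      (∀ i ≤ s, (F i).Monic ∧ Irreducible (F i)) ∧ (∀ i < s, F (i + 1) ∣ Qtrans (F i)) ∧
      (F s).natDegree = N ∧ (F s).coeff (N - 1) = 1 ∧ (F s).coeff 1 = 1 := by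
  have h_minpoly (c : K) : (minpoly (ZMod 2) c).Monic ∧ Irreducible (minpoly (ZMod 2) c) :=
    have := Algebra.IsIntegral.isIntegral c
    ⟨minpoly.monic this, minpoly.irreducible this⟩
  induction h with
  | @of_isTypeA k a h =>
    exact ⟨0, fun _ ↦ minpoly (ZMod 2) a, by simp, rfl, fun _ _ ↦ h_minpoly a, by simp,
      h.natDegree_minpoly, h.coeff_minpoly⟩
  | @step k b hb _ ih =>
    obtain ⟨s, F, hs, hF0, hF, hdvd, hFs⟩ := ih
    refine ⟨s + 1, fun i ↦ Nat.casesOn i (minpoly (ZMod 2) (b + b⁻¹)) F, by lia, rfl, ?_, ?_, hFs⟩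
    · rintro (_ | i) hi
      · exact h_minpoly _
      · exact hF i (by lia)
    · rintro (_ | i) hi
      · exact hF0.dvd.trans (minpoly_dvd_Qtrans hb)
      · exact hdvd i (by lia)

end Chain

end Descent

end Koblitz

theorem stmt_0 (n l m : ℕ) (hn : 1 ≤ n) (hm : Odd m) (hfact : n = 2 ^ l * m)
    (f0 : Polynomial (ZMod 2)) (hmon : f0.Monic) (hirr : Irreducible f0)
    (hdeg : f0.natDegree = n) :
    ∃ (s : ℕ) (F : ℕ → Polynomial (ZMod 2)),
      s ≤ l + 3 ∧ F 0 = f0 ∧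
      (∀ i ≤ s, (F i).Monic ∧ Irreducible (F i)) ∧
      (∀ i < s, F (i + 1) ∣ Qtrans (F i)) ∧
      ((F s).natDegree = n ∨ (F s).natDegree = 2 * n) ∧
      (F s).coeff ((F s).natDegree - 1) = 1 ∧ (F s).coeff 1 = 1 := by
  obtain ⟨a, ha⟩ := IsAlgClosed.exists_aeval_eq_zero (AlgebraicClosure (ZMod 2)) f0
    hirr.degree_pos.ne'
  obtain rfl : f0 = minpoly (ZMod 2) a := minpoly.eq_of_irreducible_of_monic hirr ha hmon
  obtain ⟨N, hN, h⟩ : ∃ N, (N = n ∨ N = 2 * n) ∧ ReachesTypeA N (l + 3) a := by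
    obtain h | h := reachesTypeA_or_reachesTypeA hm (hdeg.trans hfact)
    · exact ⟨_, .inl hfact.symm, h⟩
    · exact ⟨_, .inr (by rw [hfact]; ring), h⟩
  obtain ⟨s, F, hs, hF0, hF, hdvd, hFN, hcoeff⟩ := h.exists_chain
  exact ⟨s, F, hs, hF0, hF, hdvd, hFN ▸ hN, hFN ▸ hcoeff⟩
end

section
/- Let f ∈ F_2[x] be a monic irreducible polynomial of type (D,n) with n > 1, and write f^Q = g_1 · g_2 with g_1, g_2 distinct monic irreducible polynomials of degree n and g_2 = g_1*. Then at least one of g_1, g_2 has a root β in the finite field F_{2^n} which is not θ-periodic. -/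
open Polynomial

/-- The map `θ(x) = x + x⁻¹` (with the convention `0⁻¹ = 0`). -/
def theta {K : Type*} [Field K] (x : K) : K := x + x⁻¹

/-- An element is `θ`-periodic if some positive iterate of `θ` fixes it. -/
def ThetaPeriodic {K : Type*} [Field K] (α : K) : Prop :=
  ∃ k : ℕ, 1 ≤ k ∧ theta^[k] α = α

/-!
The map `θ` does not distinguish `β` from `β⁻¹`, whereas two periodic points of any self-map with
the same image coincide. Hence if `β ≠ β⁻¹`, then `β` and `β⁻¹` are not both `θ`-periodic. The only
elements of a field that equal their own inverse are `0` and `±1`, and these are not roots of a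
polynomial without roots in the base field. Finally, inversion carries the roots of `g` to
the roots of its reciprocal.
-/

section Theta

variable {K : Type*} [Field K]

theorem theta_inv (x : K) : theta x⁻¹ = theta x := by
  simp [theta, add_comm]

theorem ThetaPeriodic.eq_of_theta_eq {x y : K} (hx : ThetaPeriodic x) (hy : ThetaPeriodic y)
    (h : theta x = theta y) : x = y := by
  obtain ⟨k, hk, hxk⟩ := hx
  obtain ⟨l, hl, hyl⟩ := hy
  exact Function.IsPeriodicPt.eq_of_apply_eq hxk hyl hk hl h

theorem ThetaPeriodic.not_inv {x : K} (hx : ThetaPeriodic x) (hne : x ≠ x⁻¹) :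
    ¬ ThetaPeriodic x⁻¹ :=
  fun hinv => hne (hx.eq_of_theta_eq hinv (theta_inv x).symm)

end Theta

section Roots

theorem aeval_inv_reverse_eq_zero_iff {R K : Type*} [CommSemiring R] [Semifield K] [Algebra R K]
    {x : K} (hx : x ≠ 0) (g : R[X]) : aeval x⁻¹ g.reverse = 0 ↔ aeval x g = 0 := by
  have := invertibleOfNonzero hx
  simpa only [aeval_def, invOf_eq_inv] using eval₂_reverse_eq_zero_iff (algebraMap R K) x g

variable {F K : Type*} [Field F] [Field K] [Algebra F K] {g : F[X]}

theorem ne_algebraMap_of_aeval_eq_zero (hg : ∀ a, ¬ g.IsRoot a) {x : K} (hx : aeval x g = 0)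
    (a : F) : x ≠ algebraMap F K a := by
  rintro rfl
  rw [aeval_algebraMap_apply, map_eq_zero, coe_aeval_eq_eval] at hx
  exact hg a hx

theorem ne_inv_of_aeval_eq_zero (hg : ∀ a, ¬ g.IsRoot a) {x : K} (hx : aeval x g = 0) :
    x ≠ x⁻¹ := by
  have hbase := ne_algebraMap_of_aeval_eq_zero hg hx
  rw [Ne, self_eq_inv₀]
  rintro (h | h | h)
  · exact hbase (-1) (by simpa using h)
  · exact hbase 0 (by simpa using h)
  · exact hbase 1 (by simpa using h)

theorem exists_aeval_eq_zero_of_natDegree_dvd_finrank [Finite K] (hg : Irreducible g)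
    (hdvd : g.natDegree ∣ Module.finrank F K) : ∃ x : K, aeval x g = 0 := by
  have : Fact (Irreducible g) := ⟨hg⟩
  have hfinrank : Module.finrank F (AdjoinRoot g) = g.natDegree := by
    rw [(AdjoinRoot.powerBasis hg.ne_zero).finrank, AdjoinRoot.powerBasis_dim]
  obtain ⟨φ⟩ : Nonempty (AdjoinRoot g →ₐ[F] K) :=
    FiniteField.nonempty_algHom_of_finrank_dvd (hfinrank ▸ hdvd)
  use φ (AdjoinRoot.root g)
  rw [aeval_algHom_apply, AdjoinRoot.aeval_eq, AdjoinRoot.mk_self, map_zero]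

end Roots

theorem stmt_6_general {F K : Type*} [Field F] [Field K] [Algebra F K] {g : F[X]}
    (hg : ∀ a, ¬ g.IsRoot a) (hK : ∃ β : K, aeval β g = 0) :
    ∃ β : K, (aeval β g = 0 ∨ aeval β g.reverse = 0) ∧ ¬ ThetaPeriodic β := by
  obtain ⟨β, hβ⟩ := hK
  by_cases hper : ThetaPeriodic β
  · have hβ₀ : β ≠ 0 := by simpa using ne_algebraMap_of_aeval_eq_zero hg hβ 0
    exact ⟨β⁻¹, .inr ((aeval_inv_reverse_eq_zero_iff hβ₀ g).2 hβ),
      hper.not_inv (ne_inv_of_aeval_eq_zero hg hβ)⟩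
  · exact ⟨β, .inl hβ, hper⟩

theorem stmt_6 (n : ℕ) (hn : 1 < n) (f : Polynomial (ZMod 2))
    (hmon : f.Monic) (hirr : Irreducible f) (hdeg : f.natDegree = n)
    (hD : f.coeff (n - 1) = 0 ∧ f.coeff 1 = 0)
    (g₁ g₂ : Polynomial (ZMod 2))
    (hfQ : Qtrans f = g₁ * g₂) (hne : g₁ ≠ g₂) (hrev : g₂ = g₁.reverse)
    (hg₁ : g₁.Monic ∧ Irreducible g₁ ∧ g₁.natDegree = n)
    (hg₂ : g₂.Monic ∧ Irreducible g₂ ∧ g₂.natDegree = n) :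
    ∃ β : GaloisField 2 n,
      (Polynomial.aeval β g₁ = 0 ∨ Polynomial.aeval β g₂ = 0) ∧ ¬ ThetaPeriodic β := by
  obtain ⟨-, hirr₁, rfl⟩ := hg₁
  have hfinrank := GaloisField.finrank 2 (Nat.ne_zero_of_lt hn)
  exact hrev ▸ stmt_6_general (fun _ => hirr₁.not_isRoot_of_natDegree_ne_one hn.ne')
    (exists_aeval_eq_zero_of_natDegree_dvd_finrank hirr₁ hfinrank.symm.dvd)
end
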